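/- Let β ∈ {0,1}. For all r > 0, |m_β''(r)| ∼ r ⟨√β r⟩ ⟨r⟩^{-5/2}; that is, there are absolute constants c₁, c₂ > 0 with c₁ r ⟨√β r⟩ ⟨r⟩^{-5/2} ≤ |m_β''(r)| ≤ c₂ r ⟨√β r⟩ ⟨r⟩^{-5/2} for all r > 0. -/

import Mathlib

noncomputable section

open Real

/-- Japanese bracket `⟨x⟩ = (1+|x|²)^{1/2}`. -/
def jap (x : ℝ) : ℝ := Real.sqrt (1 + x ^ 2)

/-- The symbol `m_β(r) = √(r(1+βr²)tanh r)`. -/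
def mSymb (β r : ℝ) : ℝ := Real.sqrt (r * (1 + β * r ^ 2) * Real.tanh r)

/-!
Write `t = tanh r`, and let `σ = r t' / t` and `2Q = 2βr² / (1 + βr²)` be the elasticities
(`r f' / f`) of `tanh r` and `1 + βr²`. Then `m' = m (1 + σ + 2Q) / (2r)`, and since
`r σ' = σ (1 - σ - 2rt)` and `r Q' = 2Q (1 - Q)`, differentiating once more gives
`4 r² m'' / m = 4Q (2 + σ - Q) - K` with `K = (1 - σ)² + 4rσt`.
With `q = r² / (1 + r²)`, both `t²` and `K` are comparable to `q`; this settles `β = 0`, where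
`Q = 0`. The positive term increases with `Q`, hence with `β`, and at `β = 1`, where `Q = q`, it
exceeds `K` by at least `q / 4`.
Finally `m = √(r t) ⟨√β r⟩` is comparable to `r ⟨r⟩^{-1/2} ⟨√β r⟩`, and `q / r² = ⟨r⟩⁻²`.
-/

open Filter Topology

theorem iteratedDeriv_two_eq_mul {𝕜 : Type*} [NontriviallyNormedField 𝕜] {f k : 𝕜 → 𝕜} {k' x : 𝕜}
    (hf : ∀ᶠ y in 𝓝 x, HasDerivAt f (f y * k y) y) (hk : HasDerivAt k k' x) :
    iteratedDeriv 2 f x = f x * (k' + k x ^ 2) := by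
  have hderiv : deriv f =ᶠ[𝓝 x] fun y => f y * k y := hf.mono fun _ hy => hy.deriv
  rw [iteratedDeriv_succ, iteratedDeriv_one, hderiv.deriv_eq, (hf.self_of_nhds.fun_mul hk).deriv]
  ring

section Hyperbolic

theorem hasDerivAt_tanh (x : ℝ) : HasDerivAt tanh (1 - tanh x ^ 2) x := by
  have hcosh := (cosh_pos x).ne'
  have htanh : tanh = fun y => sinh y / cosh y := funext tanh_eq_sinh_div_cosh
  rw [htanh]
  refine ((hasDerivAt_sinh x).fun_div (hasDerivAt_cosh x) hcosh).congr_deriv ?_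
  field_simp

theorem one_sub_tanh_sq (x : ℝ) : 1 - tanh x ^ 2 = 1 / cosh x ^ 2 := by
  have hcosh := (cosh_pos x).ne'
  rw [tanh_eq_sinh_div_cosh]
  field_simp
  exact cosh_sq_sub_sinh_sq x

theorem one_sub_tanh_sq_pos (x : ℝ) : 0 < 1 - tanh x ^ 2 :=
  sub_pos.2 (tanh_sq_lt_one x)

theorem sq_le_sinh_sq (x : ℝ) : x ^ 2 ≤ sinh x ^ 2 := by
  rw [sq_le_sq, abs_sinh]
  exact self_le_sinh_iff.2 (abs_nonneg x)

theorem one_add_sq_div_two_le_cosh (x : ℝ) : 1 + x ^ 2 / 2 ≤ cosh x := by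
  have hdouble : cosh x = 1 + 2 * sinh (x / 2) ^ 2 := by
    rw [show x = 2 * (x / 2) by ring, cosh_two_mul, cosh_sq, ← show x = 2 * (x / 2) by ring]
    ring
  linarith [sq_le_sinh_sq (x / 2)]

theorem one_add_sq_div_two_sq_mul_le_one (x : ℝ) :
    (1 + x ^ 2 / 2) ^ 2 * (1 - tanh x ^ 2) ≤ 1 := by
  rw [one_sub_tanh_sq, mul_one_div, div_le_one (pow_pos (cosh_pos x) 2)]
  gcongr
  exact one_add_sq_div_two_le_cosh x

theorem sq_mul_one_sub_tanh_sq_le (x : ℝ) : x ^ 2 * (1 - tanh x ^ 2) ≤ tanh x ^ 2 := by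
  rw [one_sub_tanh_sq, mul_one_div, tanh_eq_sinh_div_cosh, div_pow]
  gcongr ?_ / _
  exact sq_le_sinh_sq x

variable {r : ℝ}

theorem tanh_pos (hr : 0 < r) : 0 < tanh r := by
  rw [tanh_eq_sinh_div_cosh]
  exact div_pos (sinh_pos_iff.2 hr) (cosh_pos r)

theorem tanh_le_self (hr : 0 ≤ r) : tanh r ≤ r := by
  have hderiv (x : ℝ) : deriv tanh x ≤ 1 := by
    rw [(hasDerivAt_tanh x).deriv]
    linarith [sq_nonneg (tanh x)]
  simpa using image_sub_le_mul_sub_of_deriv_le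
    (fun x => (hasDerivAt_tanh x).differentiableAt) hderiv hr

end Hyperbolic

/-- The elasticity `r f'(r) / f(r)` of `f = tanh`; it equals `2r / sinh 2r` for `r ≠ 0`. -/
def tanhElasticity (r : ℝ) : ℝ := r * (1 - tanh r ^ 2) / tanh r

/-- The share of the capillary term `βr²` in the factor `1 + βr²` of the symbol, which is also half
the elasticity of that factor. For `β = 1` it is the reference quantity `r² / ⟨r⟩²`. -/
def capillaryRatio (β r : ℝ) : ℝ := β * r ^ 2 / (1 + β * r ^ 2)

/-- The quantity `-4 r² m₀'' / m₀` measuring the concavity of the pure gravity symbol `m₀`. -/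
def gravityCurvature (r : ℝ) : ℝ := (1 - tanhElasticity r) ^ 2 + 4 * r * tanhElasticity r * tanh r

/-- The normalized second derivative `4 r² m_β'' / m_β` of the symbol. -/
def symbolCurvature (β r : ℝ) : ℝ :=
  4 * capillaryRatio β r * (2 + tanhElasticity r - capillaryRatio β r) - gravityCurvature r

variable {β r : ℝ}

section Derivatives

theorem hasDerivAt_tanhElasticity (hr : 0 < r) :
    HasDerivAt tanhElasticity
      (tanhElasticity r * (1 - tanhElasticity r - 2 * r * tanh r) / r) r := by
  have ht := (tanh_pos hr).ne'
  refine (((hasDerivAt_id r).fun_mul (((hasDerivAt_tanh r).fun_pow 2).const_sub 1)).fun_div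
    (hasDerivAt_tanh r) ht).congr_deriv ?_
  simp only [tanhElasticity, id]
  field_simp
  ring

theorem hasDerivAt_capillaryRatio (hβ : 0 ≤ β) (hr : r ≠ 0) :
    HasDerivAt (capillaryRatio β)
      (2 * capillaryRatio β r * (1 - capillaryRatio β r) / r) r := by
  have hden : 1 + β * r ^ 2 ≠ 0 := by positivity
  have hsq : HasDerivAt (fun x => β * x ^ 2) (2 * β * r) r :=
    ((hasDerivAt_pow 2 r).const_mul β).congr_deriv (by ring)
  refine (hsq.fun_div (hsq.const_add 1) hden).congr_deriv ?_
  simp only [capillaryRatio]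
  field_simp

theorem hasDerivAt_mSymb (hβ : 0 ≤ β) (hr : 0 < r) :
    HasDerivAt (mSymb β)
      (mSymb β r * ((1 + tanhElasticity r + 2 * capillaryRatio β r) / (2 * r))) r := by
  have ht := tanh_pos hr
  have hpos : 0 < r * (1 + β * r ^ 2) * tanh r := by positivity
  have hpoly : HasDerivAt (fun x => x * (1 + β * x ^ 2)) (1 + 3 * β * r ^ 2) r :=
    ((hasDerivAt_id r).fun_mul (((hasDerivAt_pow 2 r).const_mul β).const_add 1)).congr_deriv
      (by simp only [id]; ring)
  refine ((hpoly.fun_mul (hasDerivAt_tanh r)).sqrt hpos.ne').congr_deriv ?_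
  set f := r * (1 + β * r ^ 2) * tanh r with hf
  calc _ = 2 * f * ((1 + tanhElasticity r + 2 * capillaryRatio β r) / (2 * r)) / (2 * √f) := by
        rw [hf, tanhElasticity, capillaryRatio]
        field_simp
        ring
    _ = mSymb β r * ((1 + tanhElasticity r + 2 * capillaryRatio β r) / (2 * r)) := by
        rw [mul_assoc, mul_div_mul_left _ _ two_ne_zero, mul_div_right_comm, div_sqrt, mSymb]

theorem iteratedDeriv_two_mSymb (hβ : 0 ≤ β) (hr : 0 < r) :
    iteratedDeriv 2 (mSymb β) r = mSymb β r * (symbolCurvature β r / (4 * r ^ 2)) := by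
  have hnum := ((hasDerivAt_tanhElasticity hr).const_add 1).fun_add
    ((hasDerivAt_capillaryRatio hβ hr.ne').const_mul 2)
  have hk := hnum.fun_div ((hasDerivAt_id r).const_mul 2) (by simpa using hr.ne')
  rw [iteratedDeriv_two_eq_mul ((eventually_gt_nhds hr).mono fun _ hx => hasDerivAt_mSymb hβ hx) hk]
  congr 1
  simp only [symbolCurvature, gravityCurvature, id]
  field_simp
  ring

end Derivatives

section Estimates

theorem capillaryRatio_zero (r : ℝ) : capillaryRatio 0 r = 0 := by
  simp [capillaryRatio]

theorem capillaryRatio_nonneg (hβ : 0 ≤ β) (r : ℝ) : 0 ≤ capillaryRatio β r := by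
  unfold capillaryRatio
  positivity

theorem capillaryRatio_le_one (hβ : 0 ≤ β) (r : ℝ) : capillaryRatio β r ≤ 1 := by
  unfold capillaryRatio
  rw [div_le_one (by positivity)]
  linarith

theorem capillaryRatio_mono_left {α : ℝ} (hα : 0 ≤ α) (hαβ : α ≤ β) (r : ℝ) :
    capillaryRatio α r ≤ capillaryRatio β r := by
  have hβ := hα.trans hαβ
  unfold capillaryRatio
  rw [div_le_div_iff₀ (by positivity) (by positivity)]
  linarith [mul_le_mul_of_nonneg_right hαβ (sq_nonneg r)]

theorem capillaryRatio_le_mul (hβ : 1 ≤ β) (r : ℝ) :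
    capillaryRatio β r ≤ β * capillaryRatio 1 r := by
  unfold capillaryRatio
  rw [one_mul, mul_div_assoc']
  gcongr
  exact le_mul_of_one_le_left (sq_nonneg r) hβ

theorem capillaryRatio_one_le_tanh_sq (r : ℝ) : capillaryRatio 1 r ≤ tanh r ^ 2 := by
  rw [capillaryRatio, one_mul, div_le_iff₀ (by positivity)]
  linarith [sq_mul_one_sub_tanh_sq_le r]

theorem min_one_sq_le_capillaryRatio_one (r : ℝ) :
    min 1 (r ^ 2) ≤ capillaryRatio 1 r * (3 - 2 * capillaryRatio 1 r) := by
  have hrat : capillaryRatio 1 r * (3 - 2 * capillaryRatio 1 r) =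
      r ^ 2 * (r ^ 2 + 3) / (1 + r ^ 2) ^ 2 := by
    simp only [capillaryRatio, one_mul]
    field_simp
    ring
  rw [hrat, le_div_iff₀ (by positivity)]
  rcases le_total 1 (r ^ 2) with h | h
  · rw [min_eq_left h]
    linarith
  · rw [min_eq_right h]
    gcongr
    linarith [pow_le_one₀ (n := 2) (sq_nonneg r) h]

theorem tanh_sq_le_capillaryRatio_one (hr : 0 < r) :
    tanh r ^ 2 ≤ capillaryRatio 1 r * (3 - 2 * capillaryRatio 1 r) := by
  have hsq : tanh r ^ 2 ≤ r ^ 2 := pow_le_pow_left₀ (tanh_pos hr).le (tanh_le_self hr.le) 2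
  exact (le_min (tanh_sq_lt_one r).le hsq).trans (min_one_sq_le_capillaryRatio_one r)

theorem tanh_sq_le_three_mul_capillaryRatio_one (hr : 0 < r) :
    tanh r ^ 2 ≤ 3 * capillaryRatio 1 r := by
  linarith [tanh_sq_le_capillaryRatio_one hr, mul_self_nonneg (capillaryRatio 1 r)]

/-- With `q = capillaryRatio 1 r`, the constant `19/4` leaves a margin
`4q (2 - q) - q (3 - 2q) - q (19/4 - 2q) = q / 4` in the lower bound at `β = 1`. -/
theorem four_mul_sq_mul_one_sub_tanh_sq_le (r : ℝ) :
    4 * r ^ 2 * (1 - tanh r ^ 2) ≤ capillaryRatio 1 r * (19 / 4 - 2 * capillaryRatio 1 r) := by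
  have hrat : capillaryRatio 1 r * (19 / 4 - 2 * capillaryRatio 1 r) =
      r ^ 2 * (11 * r ^ 2 + 19) / (4 * (1 + r ^ 2) ^ 2) := by
    simp only [capillaryRatio, one_mul]
    field_simp
    ring
  have hpoly : 16 * (1 + r ^ 2) ^ 2 ≤ (11 * r ^ 2 + 19) * (1 + r ^ 2 / 2) ^ 2 := by
    nlinarith [sq_nonneg r, sq_nonneg (r ^ 2 - 1), mul_nonneg (sq_nonneg r) (sq_nonneg (r ^ 2 - 1))]
  have hs := (one_sub_tanh_sq_pos r).le
  rw [hrat, le_div_iff₀ (by positivity)]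
  calc 4 * r ^ 2 * (1 - tanh r ^ 2) * (4 * (1 + r ^ 2) ^ 2)
      = r ^ 2 * (16 * (1 + r ^ 2) ^ 2 * (1 - tanh r ^ 2)) := by ring
    _ ≤ r ^ 2 * ((11 * r ^ 2 + 19) * (1 + r ^ 2 / 2) ^ 2 * (1 - tanh r ^ 2)) := by gcongr
    _ = r ^ 2 * (11 * r ^ 2 + 19) * ((1 + r ^ 2 / 2) ^ 2 * (1 - tanh r ^ 2)) := by ring
    _ ≤ r ^ 2 * (11 * r ^ 2 + 19) :=
        mul_le_of_le_one_right (by positivity) (one_add_sq_div_two_sq_mul_le_one r)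

theorem tanhElasticity_mul_tanh (hr : 0 < r) : tanhElasticity r * tanh r = r * (1 - tanh r ^ 2) :=
  div_mul_cancel₀ _ (tanh_pos hr).ne'

theorem tanhElasticity_nonneg (hr : 0 < r) : 0 ≤ tanhElasticity r :=
  div_nonneg (mul_nonneg hr.le (one_sub_tanh_sq_pos r).le) (tanh_pos hr).le

theorem tanhElasticity_le_one (hr : 0 < r) : tanhElasticity r ≤ 1 := by
  refine (div_le_one (tanh_pos hr)).2 (le_of_sq_le_sq ?_ (tanh_pos hr).le)
  calc (r * (1 - tanh r ^ 2)) ^ 2 = r ^ 2 * (1 - tanh r ^ 2) * (1 - tanh r ^ 2) := by ring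
    _ ≤ r ^ 2 * (1 - tanh r ^ 2) :=
        mul_le_of_le_one_right (mul_nonneg (sq_nonneg r) (one_sub_tanh_sq_pos r).le)
          (by linarith [sq_nonneg (tanh r)])
    _ ≤ tanh r ^ 2 := sq_mul_one_sub_tanh_sq_le r

theorem one_sub_tanhElasticity_le (hr : 0 < r) : 1 - tanhElasticity r ≤ tanh r ^ 2 := by
  have : 1 - tanh r ^ 2 ≤ tanhElasticity r := by
    rw [tanhElasticity, le_div_iff₀ (tanh_pos hr), mul_comm]
    exact mul_le_mul_of_nonneg_right (tanh_le_self hr.le) (one_sub_tanh_sq_pos r).le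
  linarith

theorem one_sub_tanhElasticity_sq_le (hr : 0 < r) :
    (1 - tanhElasticity r) ^ 2 ≤ tanh r ^ 2 :=
  calc (1 - tanhElasticity r) ^ 2 ≤ 1 - tanhElasticity r :=
        pow_le_of_le_one (sub_nonneg.2 (tanhElasticity_le_one hr))
          (sub_le_self _ (tanhElasticity_nonneg hr)) two_ne_zero
    _ ≤ tanh r ^ 2 := one_sub_tanhElasticity_le hr

theorem gravityCurvature_eq (hr : 0 < r) :
    gravityCurvature r = (1 - tanhElasticity r) ^ 2 + 4 * r ^ 2 * (1 - tanh r ^ 2) := by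
  rw [gravityCurvature, mul_assoc, tanhElasticity_mul_tanh hr]
  ring

theorem gravityCurvature_le_tanh_sq (hr : 0 < r) : gravityCurvature r ≤ 5 * tanh r ^ 2 := by
  rw [gravityCurvature_eq hr]
  linarith [one_sub_tanhElasticity_sq_le hr, sq_mul_one_sub_tanh_sq_le r]

/-- With `σ = tanhElasticity r`, both `tanh r ≤ 1` and `σ tanh r ≤ r` bound the curvature below by
`((1 - σ)² + 4σ²) tanh² r`, and `(1 - σ)² + 4σ² ≥ 4/5` by Cauchy-Schwarz. -/
theorem tanh_sq_le_gravityCurvature (hr : 0 < r) : 4 / 5 * tanh r ^ 2 ≤ gravityCurvature r := by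
  set σ := tanhElasticity r
  set t := tanh r
  have ht : t ^ 2 ≤ 1 := (tanh_sq_lt_one r).le
  have hσt : σ * t ≤ r := by
    rw [tanhElasticity_mul_tanh hr]
    exact mul_le_of_le_one_right hr.le (by linarith [sq_nonneg t])
  have hσt_nonneg : 0 ≤ σ * t := mul_nonneg (tanhElasticity_nonneg hr) (tanh_pos hr).le
  calc 4 / 5 * t ^ 2 ≤ ((1 - σ) ^ 2 + 4 * σ ^ 2) * t ^ 2 := by
        gcongr
        linarith [sq_nonneg (5 * σ - 1)]
    _ = (1 - σ) ^ 2 * t ^ 2 + 4 * (σ * t) * (σ * t) := by ring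
    _ ≤ (1 - σ) ^ 2 * 1 + 4 * r * (σ * t) := by gcongr
    _ = gravityCurvature r := by rw [gravityCurvature]; ring

theorem gravityCurvature_nonneg (hr : 0 < r) : 0 ≤ gravityCurvature r :=
  (by positivity : 0 ≤ 4 / 5 * tanh r ^ 2).trans (tanh_sq_le_gravityCurvature hr)

theorem abs_symbolCurvature_zero_bounds (hr : 0 < r) :
    4 / 5 * capillaryRatio 1 r ≤ |symbolCurvature 0 r| ∧
      |symbolCurvature 0 r| ≤ 15 * capillaryRatio 1 r := by
  have habs : |symbolCurvature 0 r| = gravityCurvature r := by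
    simp [symbolCurvature, capillaryRatio_zero, abs_of_nonneg (gravityCurvature_nonneg hr)]
  rw [habs]
  constructor
  · linarith [capillaryRatio_one_le_tanh_sq r, tanh_sq_le_gravityCurvature hr]
  · linarith [gravityCurvature_le_tanh_sq hr, tanh_sq_le_three_mul_capillaryRatio_one hr]

theorem symbolCurvature_mono_left {α : ℝ} (hα : 0 ≤ α) (hαβ : α ≤ β) (hr : 0 < r) :
    symbolCurvature α r ≤ symbolCurvature β r := by
  have hQ := capillaryRatio_mono_left hα hαβ r
  have hsum : 0 ≤ 2 + tanhElasticity r - capillaryRatio β r - capillaryRatio α r := by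
    linarith [capillaryRatio_le_one hα r, capillaryRatio_le_one (hα.trans hαβ) r,
      tanhElasticity_nonneg hr]
  unfold symbolCurvature
  linarith [mul_nonneg (sub_nonneg.2 hQ) hsum]

theorem capillaryRatio_one_le_symbolCurvature_one (hr : 0 < r) :
    1 / 4 * capillaryRatio 1 r ≤ symbolCurvature 1 r := by
  have hσ := mul_nonneg (capillaryRatio_nonneg zero_le_one r) (tanhElasticity_nonneg hr)
  rw [symbolCurvature, gravityCurvature_eq hr]
  linarith [one_sub_tanhElasticity_sq_le hr, tanh_sq_le_capillaryRatio_one hr,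
    four_mul_sq_mul_one_sub_tanh_sq_le r]

theorem symbolCurvature_le_capillaryRatio (hβ : 0 ≤ β) (hr : 0 < r) :
    symbolCurvature β r ≤ 12 * capillaryRatio β r := by
  have hQ := capillaryRatio_nonneg hβ r
  unfold symbolCurvature
  nlinarith [gravityCurvature_nonneg hr, mul_nonneg hQ (sub_nonneg.2 (tanhElasticity_le_one hr))]

theorem abs_symbolCurvature_comparable (hβ : β = 0 ∨ 1 ≤ β) :
    ∃ c₁ > (0 : ℝ), ∃ c₂ > (0 : ℝ), ∀ r : ℝ, 0 < r →
      c₁ * capillaryRatio 1 r ≤ |symbolCurvature β r| ∧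
        |symbolCurvature β r| ≤ c₂ * capillaryRatio 1 r := by
  rcases hβ with rfl | hβ
  · exact ⟨4 / 5, by norm_num, 15, by norm_num, fun r hr => abs_symbolCurvature_zero_bounds hr⟩
  refine ⟨1 / 4, by norm_num, 12 * β, by positivity, fun r hr => ?_⟩
  have hβ₀ := zero_le_one.trans hβ
  have hlower : 1 / 4 * capillaryRatio 1 r ≤ symbolCurvature β r :=
    (capillaryRatio_one_le_symbolCurvature_one hr).trans
      (symbolCurvature_mono_left zero_le_one hβ hr)
  have hq := capillaryRatio_nonneg zero_le_one r
  rw [abs_of_nonneg (by linarith)]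
  exact ⟨hlower, by linarith [symbolCurvature_le_capillaryRatio hβ₀ hr, capillaryRatio_le_mul hβ r]⟩

end Estimates

section JapaneseBracket

theorem jap_pos (x : ℝ) : 0 < jap x := sqrt_pos.2 (by positivity)

theorem jap_sq (x : ℝ) : jap x ^ 2 = 1 + x ^ 2 := sq_sqrt (by positivity)

theorem jap_rpow_neg_five_halves (hr : r ≠ 0) :
    jap r ^ (-(5 : ℝ) / 2) = jap r ^ (-(1 : ℝ) / 2) * (capillaryRatio 1 r / r ^ 2) := by
  have hratio : capillaryRatio 1 r / r ^ 2 = jap r ^ (-2 : ℝ) := by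
    rw [rpow_neg (jap_pos r).le, rpow_two, jap_sq, capillaryRatio]
    field_simp
  rw [hratio, ← rpow_add (jap_pos r)]
  norm_num

theorem mul_jap_rpow_neg_half (hr : 0 ≤ r) : r * jap r ^ (-(1 : ℝ) / 2) = √(r ^ 2 / jap r) := by
  rw [sqrt_div (sq_nonneg r), sqrt_sq hr, neg_div, rpow_neg (jap_pos r).le, ← sqrt_eq_rpow,
    div_eq_mul_inv]

theorem self_le_jap_mul_tanh (hr : 0 < r) : r ≤ jap r * tanh r := by
  refine le_of_sq_le_sq ?_ (mul_pos (jap_pos r) (tanh_pos hr)).le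
  rw [mul_pow, jap_sq]
  linarith [sq_mul_one_sub_tanh_sq_le r]

theorem jap_mul_tanh_le (hr : 0 < r) : jap r * tanh r ≤ 2 * r := by
  refine le_of_sq_le_sq ?_ (by positivity)
  calc (jap r * tanh r) ^ 2 = (1 + r ^ 2) * tanh r ^ 2 := by rw [mul_pow, jap_sq]
    _ ≤ (1 + r ^ 2) * (3 * capillaryRatio 1 r) := by
        gcongr
        exact tanh_sq_le_three_mul_capillaryRatio_one hr
    _ = 3 * r ^ 2 := by rw [capillaryRatio, one_mul]; field_simp
    _ ≤ (2 * r) ^ 2 := by linarith [sq_nonneg r]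

theorem mSymb_eq (hβ : 0 ≤ β) (hr : 0 < r) : mSymb β r = √(r * tanh r) * jap (√β * r) := by
  rw [mSymb, jap, mul_pow, sq_sqrt hβ, mul_right_comm,
    sqrt_mul (mul_pos hr (tanh_pos hr)).le]

theorem le_mSymb (hβ : 0 ≤ β) (hr : 0 < r) :
    r * jap r ^ (-(1 : ℝ) / 2) * jap (√β * r) ≤ mSymb β r := by
  rw [mSymb_eq hβ hr, mul_jap_rpow_neg_half hr.le]
  refine mul_le_mul_of_nonneg_right (sqrt_le_sqrt ?_) (jap_pos _).le
  rw [div_le_iff₀ (jap_pos r)]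
  linarith [mul_le_mul_of_nonneg_left (self_le_jap_mul_tanh hr) hr.le]

theorem mSymb_le (hβ : 0 ≤ β) (hr : 0 < r) :
    mSymb β r ≤ 2 * (r * jap r ^ (-(1 : ℝ) / 2) * jap (√β * r)) := by
  have htwo : 2 * √(r ^ 2 / jap r) = √(4 * (r ^ 2 / jap r)) := by
    rw [sqrt_mul (by norm_num), show (4 : ℝ) = 2 ^ 2 by norm_num, sqrt_sq zero_le_two]
  rw [mSymb_eq hβ hr, mul_jap_rpow_neg_half hr.le, ← mul_assoc, htwo]
  refine mul_le_mul_of_nonneg_right (sqrt_le_sqrt ?_) (jap_pos _).le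
  rw [mul_div_assoc', le_div_iff₀ (jap_pos r)]
  linarith [mul_le_mul_of_nonneg_left (jap_mul_tanh_le hr) hr.le, sq_nonneg r]

end JapaneseBracket

theorem deriv2_mSymb_comparable_general (β : ℝ) (hβ : β = 0 ∨ 1 ≤ β) :
    ∃ c₁ > (0 : ℝ), ∃ c₂ > (0 : ℝ), ∀ r : ℝ, 0 < r →
      c₁ * (r * jap (√β * r) * jap r ^ (-(5 : ℝ) / 2)) ≤ |iteratedDeriv 2 (mSymb β) r| ∧
      |iteratedDeriv 2 (mSymb β) r| ≤ c₂ * (r * jap (√β * r) * jap r ^ (-(5 : ℝ) / 2)) := by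
  have hβ₀ : 0 ≤ β := by rcases hβ with rfl | hβ <;> linarith
  obtain ⟨c₁, hc₁, c₂, hc₂, hcurv⟩ := abs_symbolCurvature_comparable hβ
  refine ⟨c₁ / 4, by positivity, c₂ / 2, by positivity, fun r hr => ?_⟩
  obtain ⟨hlower, hupper⟩ := hcurv r hr
  have hm : 0 ≤ mSymb β r := sqrt_nonneg _
  have hq := capillaryRatio_nonneg zero_le_one r
  rw [iteratedDeriv_two_mSymb hβ₀ hr, abs_mul, abs_div, abs_of_nonneg hm,
    abs_of_pos (by positivity : 0 < 4 * r ^ 2), jap_rpow_neg_five_halves hr.ne']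
  set w := r * jap r ^ (-(1 : ℝ) / 2) * jap (√β * r)
  have hw : 0 ≤ w := mul_nonneg (mul_nonneg hr.le (rpow_nonneg (jap_pos r).le _)) (jap_pos _).le
  constructor
  · calc _ = w * (c₁ * capillaryRatio 1 r / (4 * r ^ 2)) := by ring
      _ ≤ mSymb β r * (|symbolCurvature β r| / (4 * r ^ 2)) := by
        gcongr
        exact le_mSymb hβ₀ hr
  · calc mSymb β r * (|symbolCurvature β r| / (4 * r ^ 2))
        ≤ 2 * w * (c₂ * capillaryRatio 1 r / (4 * r ^ 2)) := by
          gcongr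
          exact mSymb_le hβ₀ hr
      _ = _ := by ring

/-- `|m_β''(r)| ∼ r ⟨√β r⟩ ⟨r⟩^{-5/2}` for all `r > 0`, `β ∈ {0,1}`. -/
theorem deriv2_mSymb_comparable (β : ℝ) (hβ : β = 0 ∨ β = 1) :
    ∃ c₁ > (0 : ℝ), ∃ c₂ > (0 : ℝ), ∀ r : ℝ, 0 < r →
      c₁ * (r * jap (Real.sqrt β * r) * jap r ^ (-(5 : ℝ) / 2)) ≤
        |iteratedDeriv 2 (mSymb β) r| ∧
      |iteratedDeriv 2 (mSymb β) r| ≤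
        c₂ * (r * jap (Real.sqrt β * r) * jap r ^ (-(5 : ℝ) / 2)) :=
  deriv2_mSymb_comparable_general β (hβ.imp_right Eq.ge)
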